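/- For all integers r ≥ 1, s ≥ 1, and n ≥ r+s+2, the number of Dyck paths D ∈ D_n^{r,s} whose only return is at the end (i.e. D has exactly one return, at k = n) equals Σ_{i=0}^{n-2-s-r} (i+1)·M_i·T_{n-4-i, r+s-1}. -/

import Mathlib

/-- A Dyck path of semilength `n`, encoded as a word on `Bool`
(`true` = up step `u`, `false` = down step `d`). -/
def IsDyckWord (n : ℕ) (w : List Bool) : Prop :=
  w.length = 2 * n ∧ w.count true = n ∧ w.count false = n ∧
    ∀ p : List Bool, p <+: w → p.count false ≤ p.count true

/-- The (0-based) indices of the up steps of `w`. -/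
def upIdxs (w : List Bool) : List ℕ := w.findIdxs (· == true)

/-- The (0-based) indices of the down steps of `w`. -/
def downIdxs (w : List Bool) : List ℕ := w.findIdxs (· == false)

/-- `rStat w i` is the number of `d`'s strictly between the `i`-th and the
`(i+1)`-st `u` of `w` (with `i` 1-indexed). -/
def rStat (w : List Bool) (i : ℕ) : ℕ :=
  ((w.take ((upIdxs w).getD i 0)).drop ((upIdxs w).getD (i - 1) 0 + 1)).count false

/-- `sStat w i` is the number of `u`'s strictly between the `i`-th and the
`(i+1)`-st `d` of `w` (with `i` 1-indexed). -/
def sStat (w : List Bool) (i : ℕ) : ℕ :=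
  ((w.take ((downIdxs w).getD i 0)).drop ((downIdxs w).getD (i - 1) 0 + 1)).count true

/-- The statistic `L(D) = ∏_{i=1}^{n-1} C(r_i + s_i, r_i)` of a Dyck path of semilength `n`. -/
def LStat (n : ℕ) (w : List Bool) : ℕ :=
  ∏ i ∈ Finset.Icc 1 (n - 1), Nat.choose (rStat w i + sStat w i) (rStat w i)

/-- `dyckL n k` = the set `𝒟ₙᵏ` of Dyck paths of semilength `n` with `L(D) = k`. -/
def dyckL (n k : ℕ) : Set (List Bool) := {w | IsDyckWord n w ∧ LStat n w = k}

/-- A Motzkin path, encoded as a word on `Option Bool`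
(`some true` = up, `some false` = down, `none` = horizontal). -/
def IsMotzkinWord (w : List (Option Bool)) : Prop :=
  w.count (some false) = w.count (some true) ∧
    ∀ p : List (Option Bool), p <+: w → p.count (some false) ≤ p.count (some true)

/-- `motzkin n` = the `n`-th Motzkin number `Mₙ`, the number of Motzkin paths of length `n`. -/
noncomputable def motzkin (n : ℕ) : ℕ :=
  {w : List (Option Bool) | w.length = n ∧ IsMotzkinWord w}.ncard

/-- The Motzkin ballot number `T_{n,k}`: the number of Motzkin paths of length `n`
whose first down step is in position `k` (1-indexed); by convention `T_{k-1,k} = 1`,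
counting the path of `k-1` horizontal steps. -/
noncomputable def motzkinBallot (n k : ℕ) : ℕ :=
  if n + 1 = k then 1
  else
    {w : List (Option Bool) | w.length = n ∧ IsMotzkinWord w ∧
      w.getD (k - 1) none = some false ∧ ∀ j < k - 1, w.getD j none ≠ some false}.ncard

/-- Motzkin numbers with integer index: `Mᵢ = 0` for `i < 0`. -/
noncomputable def motzkinZ (i : ℤ) : ℤ := if 0 ≤ i then (motzkin i.toNat : ℤ) else 0

/-- Motzkin ballot numbers with integer first index: `T_{n,k} = 0` for `n < 0`. -/
noncomputable def motzkinBallotZ (n : ℤ) (k : ℕ) : ℤ :=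
  if 0 ≤ n then (motzkinBallot n.toNat k : ℤ) else 0

/-- The set of returns of a Dyck path `w` of semilength `n`:
indices `1 ≤ k ≤ n` such that the path touches the `x`-axis after `2k` steps. -/
def returns (n : ℕ) (w : List Bool) : Finset ℕ :=
  (Finset.Icc 1 n).filter fun k => (w.take (2 * k)).count false = (w.take (2 * k)).count true

/-- `dyckRS n r s` = the set `𝒟ₙ^{r,s}` of Dyck paths of semilength `n` having exactly one
index `i` with `rᵢ > 0` and `sᵢ > 0`, and such that at that index `rᵢ = r` and `sᵢ = s`. -/
def dyckRS (n r s : ℕ) : Set (List Bool) :=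
  {w | IsDyckWord n w ∧ ∃ i ∈ Finset.Icc 1 (n - 1),
    (0 < rStat w i ∧ 0 < sStat w i) ∧ rStat w i = r ∧ sStat w i = s ∧
      ∀ j ∈ Finset.Icc 1 (n - 1), 0 < rStat w j ∧ 0 < sStat w j → j = i}

/-- `twoStars n w k₁ k₂` says that `k₁ < k₂` are exactly the two indices `i` of `w`
with `rᵢ > 0` and `sᵢ > 0`. -/
def twoStars (n : ℕ) (w : List Bool) (k₁ k₂ : ℕ) : Prop :=
  k₁ ∈ Finset.Icc 1 (n - 1) ∧ k₂ ∈ Finset.Icc 1 (n - 1) ∧ k₁ < k₂ ∧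
    (0 < rStat w k₁ ∧ 0 < sStat w k₁) ∧ (0 < rStat w k₂ ∧ 0 < sStat w k₂) ∧
    ∀ j ∈ Finset.Icc 1 (n - 1), 0 < rStat w j ∧ 0 < sStat w j → j = k₁ ∨ j = k₂

/-- `xStat w k` = the number of indices `i < k` with `rᵢ = 0` and `sᵢ > 0`. -/
def xStat (w : List Bool) (k : ℕ) : ℕ :=
  ((Finset.Ico 1 k).filter fun i => rStat w i = 0 ∧ 0 < sStat w i).card

/-- `yStat w k` = the number of indices `i < k` with `rᵢ > 0` and `sᵢ = 0`. -/
def yStat (w : List Bool) (k : ℕ) : ℕ :=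
  ((Finset.Ico 1 k).filter fun i => 0 < rStat w i ∧ sStat w i = 0).card

/-- The generating function `m(x) = Σ Mₙ xⁿ` of the Motzkin numbers, over `ℚ`. -/
noncomputable def motzkinGF : PowerSeries ℚ := PowerSeries.mk fun n => (motzkin n : ℚ)

/-!
Record a Dyck path by the signs of its gaps: at an index `i`, which of `0 < rᵢ` and `0 < sᵢ` holds.
These signs say after which up steps and after which down steps the path turns, so they determine
the path. With exactly one index where both hold, each other index carries one of the three letters
of a Motzkin path, and the common index cuts the sequence of letters in two. The path has its only
return at the end exactly when both pieces, the first one read backwards, are Motzkin paths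
descending to `0` from a common height `h + 1`, and then `r - 1` and `s - 1` are the numbers of
letters between their `(h+1)`-st and `(h+2)`-nd down steps.

Let `t = z m(z)`, so that `t = z (1 + t + t²)`. A recursion on the first letter shows that descents
from height `e` with `r` letters between two given consecutive down steps have the generating
function `(z (1 + t))^r t^e`, whichever gap is chosen. Summing over `h` gives
`(z (1 + t))^(r+s-2) (t² + t⁴ + ⋯)`. Differentiating the equation of `t` identifies `t² + t⁴ + ⋯`
with `z² t'`, and `t'` has the coefficients `(i + 1) Mᵢ`. The first gap of a Motzkin path (`e = 0`)
shows that `(z (1 + t))^k` is the generating function of the `T_{n,k+1}`.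
-/

/-! ### Gaps between consecutive occurrences of a letter -/

/-- The number of letters strictly between the `m`-th and the `(m+1)`-st occurrence of `a` in a
list. The `0`-th occurrence is placed just before the list, and the end of the list counts as an
occurrence. -/
def gap {α : Type*} [BEq α] (a : α) : List α → ℕ → ℕ
  | [], _ => 0
  | x :: l, 0 => if x == a then 0 else gap a l 0 + 1
  | x :: l, m + 1 => if x == a then gap a l m else gap a l (m + 1)

section Gap

variable {α : Type*} [BEq α] (a : α) (l l' : List α)

theorem gap_append_of_lt_count {m : ℕ} (h : m < l.count a) :
    gap a (l ++ l') m = gap a l m := by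
  induction l generalizing m with
  | nil => simp at h
  | cons x l ih => cases m <;> grind [gap]

theorem gap_le_length (m : ℕ) : gap a l m ≤ l.length := by
  induction l generalizing m with
  | nil => simp [gap]
  | cons x l ih => cases m <;> grind [gap]

theorem gap_map_beq (m : ℕ) : gap true (l.map (· == a)) m = gap a l m := by
  induction l generalizing m with
  | nil => rfl
  | cons x l ih => cases m <;> simp [gap, ih]

variable [LawfulBEq α]

theorem exists_append_cons_of_lt_count {k : ℕ} (h : k < l.count a) :
    ∃ p q, l = p ++ a :: q ∧ p.count a = k := by
  induction l generalizing k with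
  | nil => simp at h
  | cons x l ih =>
    rcases eq_or_ne x a with rfl | hx
    · rcases k with _ | k
      · exact ⟨[], l, rfl, rfl⟩
      · obtain ⟨p, q, rfl, hp⟩ := ih (k := k) (by simpa using h)
        exact ⟨x :: p, q, rfl, by simp [hp]⟩
    · obtain ⟨p, q, rfl, hp⟩ := ih (k := k) (by simpa [hx] using h)
      exact ⟨x :: p, q, rfl, by simp [hx, hp]⟩

theorem gap_append_count_add_succ (m : ℕ) :
    gap a (l ++ l') (l.count a + (m + 1)) = gap a l' (m + 1) := by
  induction l with
  | nil => simp
  | cons x l ih =>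
    by_cases hx : x = a <;> simp_all [gap, add_right_comm _ 1, ← add_assoc]

theorem gap_append_count :
    gap a (l ++ l') (l.count a) = gap a l (l.count a) + gap a l' 0 := by
  induction l with
  | nil => simp [gap]
  | cons x l ih =>
    by_cases hx : x = a
    · simpa [hx, gap] using ih
    · cases h : l.count a <;> simp_all [gap, add_right_comm]

theorem gap_append_cons_self_zero (h : a ∉ l) : gap a (l ++ a :: l') 0 = l.length := by
  induction l with
  | nil => simp [gap]
  | cons x l ih => simp_all [gap, Ne.symm]

theorem gap_append_singleton_self (m : ℕ) : gap a (l ++ [a]) m = gap a l m := by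
  induction l generalizing m with
  | nil => cases m <;> simp [gap]
  | cons x l ih => cases m <;> simp [gap, ih]

theorem gap_count_add_succ (m : ℕ) : gap a l (l.count a + (m + 1)) = 0 := by
  simpa [gap] using gap_append_count_add_succ a l [] m

theorem gap_reverse {m m' : ℕ} (h : m + m' = l.count a) :
    gap a l.reverse m = gap a l m' := by
  induction l generalizing m m' with
  | nil => rfl
  | cons x l ih =>
    rw [List.reverse_cons]
    rcases eq_or_ne x a with rfl | hx
    · rw [gap_append_singleton_self]
      rcases m' with _ | m'
      · rw [show m = l.reverse.count x + (0 + 1) by simpa using h, gap_count_add_succ]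
        simp [gap]
      · rw [ih (m' := m') (by simp at h; omega)]
        simp [gap]
    · have hl : m + m' = l.reverse.count a := by simpa [hx] using h
      rcases m' with _ | m'
      · rw [show m = l.reverse.count a by omega, gap_append_count, ih (m' := 0) (by simp)]
        simp [gap, hx]
      · rw [gap_append_of_lt_count _ _ _ (by omega), ih (by simpa using hl)]
        simp [gap, hx]

theorem gap_zero_eq_iff {d : α} {k : ℕ} (h : k < l.length) :
    gap a l 0 = k ↔ l.getD k d = a ∧ ∀ j < k, l.getD j d ≠ a := by
  induction l generalizing k with
  | nil => simp at h
  | cons x l ih =>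
    rcases k with _ | k
    · by_cases hx : x = a <;> simp [gap, hx]
    · rw [List.getD_cons_succ, Nat.forall_lt_succ_left]
      by_cases hx : x = a <;> simp [gap, hx, ih (Nat.lt_of_succ_lt_succ h)]

theorem getD_findIdxs_append_cons :
    ((l ++ a :: l').findIdxs (· == a)).getD (l.count a) 0 = l.length := by
  have hlen : (l.findIdxs (· == a)).length = l.count a := by simp [List.count]
  rw [List.findIdxs_append, List.getD_append_right _ _ _ _ hlen.le, hlen]
  simp

end Gap

theorem count_not_between_eq_gap (b : Bool) (w : List Bool) {k : ℕ} (h : k + 1 < w.count b) :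
    ((w.take ((w.findIdxs (· == b)).getD (k + 1) 0)).drop
      ((w.findIdxs (· == b)).getD k 0 + 1)).count (!b) = gap b w (k + 1) := by
  obtain ⟨p, l, rfl, rfl⟩ := exists_append_cons_of_lt_count b w (by omega : k < w.count b)
  obtain ⟨m, q, rfl, hm⟩ := exists_append_cons_of_lt_count b l
    (by simpa [List.count_append] using h : 0 < l.count b)
  have hgap : gap b (p ++ b :: (m ++ b :: q)) (p.count b + 1) = m.length := by
    rw [gap_append_count_add_succ, gap, if_pos BEq.rfl,
      gap_append_cons_self_zero _ _ _ (List.count_eq_zero.1 hm)]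
  have hsnd := getD_findIdxs_append_cons b (p ++ b :: m) q
  rw [show (p ++ b :: m).count b = p.count b + 1 by simp [hm], List.append_assoc,
    List.cons_append] at hsnd
  rw [hgap, hsnd, getD_findIdxs_append_cons, ← List.cons_append, ← List.append_assoc,
    List.take_left' rfl, List.append_cons, List.drop_left' (by simp)]
  have := List.count_not_add_count m b
  omega

theorem rStat_succ {w : List Bool} {k : ℕ} (h : k + 1 < w.count true) :
    rStat w (k + 1) = gap true w (k + 1) :=
  count_not_between_eq_gap true w h

theorem sStat_succ {w : List Bool} {k : ℕ} (h : k + 1 < w.count false) :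
    sStat w (k + 1) = gap false w (k + 1) :=
  count_not_between_eq_gap false w h

/-! ### Descents of Motzkin paths -/

/-- `w` is a Motzkin path from height `e` down to height `0`. -/
def IsMotzkinFrom (e : ℕ) (w : List (Option Bool)) : Prop :=
  w.count (some false) = w.count (some true) + e ∧
    ∀ p, p <+: w → p.count (some false) ≤ p.count (some true) + e

theorem forall_prefix_cons {α : Type*} {P : List α → Prop} {x : α} {w : List α} :
    (∀ p, p <+: x :: w → P p) ↔ P [] ∧ ∀ p, p <+: w → P (x :: p) := by
  simp only [List.prefix_cons_iff, or_imp, forall_and, forall_eq, forall_exists_index, and_imp]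
  exact and_congr_right fun _ => ⟨fun h p => h _ p rfl, fun h _ p hp => hp ▸ h p⟩

section IsMotzkinFrom

variable {e : ℕ} {w : List (Option Bool)}

theorem isMotzkinFrom_nil : IsMotzkinFrom e [] ↔ e = 0 := by
  simp [IsMotzkinFrom, eq_comm]

theorem isMotzkinFrom_none_cons : IsMotzkinFrom e (none :: w) ↔ IsMotzkinFrom e w := by
  simp [IsMotzkinFrom, forall_prefix_cons]

theorem isMotzkinFrom_up_cons : IsMotzkinFrom e (some true :: w) ↔ IsMotzkinFrom (e + 1) w := by
  simp [IsMotzkinFrom, forall_prefix_cons, add_right_comm, add_assoc]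

theorem isMotzkinFrom_succ_down_cons :
    IsMotzkinFrom (e + 1) (some false :: w) ↔ IsMotzkinFrom e w := by
  simp [IsMotzkinFrom, forall_prefix_cons, ← add_assoc]

theorem not_isMotzkinFrom_zero_down_cons : ¬IsMotzkinFrom 0 (some false :: w) := by
  rintro ⟨-, h⟩
  simpa using h [some false] (by simp)

theorem IsMotzkinFrom.height_unique {e' : ℕ} (h : IsMotzkinFrom e w) (h' : IsMotzkinFrom e' w) :
    e = e' := by
  have := h.1
  have := h'.1
  omega

end IsMotzkinFrom

/-- `w` is a Motzkin path from height `e` down to `0` with `r` letters between its `m`-th and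
`(m+1)`-st down steps, in the conventions of `gap`. -/
def IsMotzkinGap (r e m : ℕ) (w : List (Option Bool)) : Prop :=
  IsMotzkinFrom e w ∧ gap (some false) w m = r

/-! ### Generating functions -/

section GeneratingFunctions

open PowerSeries

section WordGF

variable {α : Type*}

/-- The length generating function of the words on a finite alphabet satisfying `P`. -/
noncomputable def wordGF (P : List α → Prop) : ℚ⟦X⟧ :=
  mk fun l => ({w | w.length = l ∧ P w}.ncard : ℚ)

theorem wordGF_false : wordGF (fun _ : List α => False) = 0 := by
  ext l
  simp [wordGF]

theorem finite_length_eq_and [Finite α] (P : List α → Prop) (l : ℕ) :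
    {w | w.length = l ∧ P w}.Finite :=
  (List.finite_length_eq α l).subset fun _ h => h.1

theorem wordGF_eq [Fintype α] (P : List α → Prop) [Decidable (P [])] :
    wordGF P = (if P [] then 1 else 0) + X * ∑ c, wordGF fun w => P (c :: w) := by
  ext l
  rcases l with _ | l
  · have hnil : {w | w.length = 0 ∧ P w} = {w | w = [] ∧ P []} := by
      ext w
      simpa using fun hw => hw ▸ Iff.rfl
    by_cases h : P [] <;> simp [wordGF, -List.length_eq_zero_iff, hnil, h]
  · have hcons : {w | w.length = l + 1 ∧ P w} =
        ⋃ c, List.cons c '' {w | w.length = l ∧ P (c :: w)} := by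
      ext w
      cases w <;> simp [eq_comm]
    have hdisj : Pairwise (Function.onFun Disjoint
        fun c => List.cons c '' {w | w.length = l ∧ P (c :: w)}) := by
      rintro c c' hc
      rw [Function.onFun, Set.disjoint_left]
      rintro _ ⟨w, -, rfl⟩ ⟨w', -, h⟩
      exact hc (List.cons_eq_cons.1 h).1.symm
    have hcard (c : α) : (List.cons c '' {w | w.length = l ∧ P (c :: w)}).ncard =
        {w | w.length = l ∧ P (c :: w)}.ncard :=
      Set.ncard_image_of_injective _ List.cons_injective
    have hone : coeff (l + 1) (if P [] then 1 else 0 : ℚ⟦X⟧) = 0 := by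
      split_ifs <;> simp [coeff_one]
    rw [map_add, coeff_succ_X_mul, map_sum, hone, zero_add, wordGF, coeff_mk, hcons,
      Set.ncard_iUnion_of_finite (fun c => (finite_length_eq_and _ l).image _) hdisj,
      finsum_eq_sum_of_fintype]
    simp [wordGF, hcard]

end WordGF

/-- A contraction principle: each `D i` being `X` times a sum of members of the family, all
coefficients vanish by induction on their degree. -/
theorem eq_zero_of_eq_X_mul_sum {R ι : Type*} [CommSemiring R] {D : ι → R⟦X⟧} {s : ι → Finset ι}
    (h : ∀ i, D i = X * ∑ j ∈ s i, D j) (i : ι) : D i = 0 := by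
  ext n
  induction n generalizing i with
  | zero => rw [h]; simp
  | succ n ih =>
    rw [h, coeff_succ_X_mul, map_sum]
    exact Finset.sum_eq_zero fun j _ => ih j

/-- The power series `t = z m(z)`, for `m` the generating function of the Motzkin numbers. -/
noncomputable def motzkinT : ℚ⟦X⟧ := X * motzkinGF

theorem motzkinGF_eq_wordGF : motzkinGF = wordGF (IsMotzkinFrom 0) := rfl

theorem wordGF_isMotzkinFrom_zero :
    wordGF (IsMotzkinFrom 0) =
      1 + X * (wordGF (IsMotzkinFrom 0) + wordGF (IsMotzkinFrom 1)) := by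
  classical
  conv_lhs => rw [wordGF_eq]
  simp [isMotzkinFrom_nil, isMotzkinFrom_none_cons, isMotzkinFrom_up_cons,
    not_isMotzkinFrom_zero_down_cons, wordGF_false]

theorem wordGF_isMotzkinFrom_succ (e : ℕ) :
    wordGF (IsMotzkinFrom (e + 1)) =
      X * (wordGF (IsMotzkinFrom e) + wordGF (IsMotzkinFrom (e + 1)) +
        wordGF (IsMotzkinFrom (e + 2))) := by
  classical
  conv_lhs => rw [wordGF_eq]
  simp only [isMotzkinFrom_nil, isMotzkinFrom_none_cons, isMotzkinFrom_up_cons,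
    isMotzkinFrom_succ_down_cons, Fintype.sum_option, Fintype.sum_bool, e.succ_ne_zero, if_false]
  ring

theorem wordGF_isMotzkinFrom_succ_eq_mul (e : ℕ) :
    wordGF (IsMotzkinFrom (e + 1)) = motzkinT * wordGF (IsMotzkinFrom e) := by
  rw [← sub_eq_zero]
  refine eq_zero_of_eq_X_mul_sum (s := fun e => Finset.Icc (e - 1) (e + 1))
    (D := fun e => wordGF (IsMotzkinFrom (e + 1)) - motzkinT * wordGF (IsMotzkinFrom e))
    (fun e => ?_) e
  have hnext := wordGF_isMotzkinFrom_succ e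
  rcases e with _ | e
  · have hzero := wordGF_isMotzkinFrom_zero
    rw [show Finset.Icc (0 - 1) (0 + 1) = {0, 1} from rfl]
    simp only [motzkinT, motzkinGF_eq_wordGF, Finset.mem_singleton, zero_ne_one, not_false_eq_true,
      Finset.sum_insert, Finset.sum_singleton] at *
    linear_combination hnext - X * wordGF (IsMotzkinFrom 0) * hzero
  · have hcur := wordGF_isMotzkinFrom_succ e
    rw [show Finset.Icc (e + 1 - 1) (e + 1 + 1) = {e, e + 1, e + 2} by grind,
      Finset.sum_insert (by simp), Finset.sum_pair (by omega)]
    linear_combination hnext - motzkinT * hcur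

theorem X_mul_wordGF_isMotzkinFrom (e : ℕ) :
    X * wordGF (IsMotzkinFrom e) = motzkinT ^ (e + 1) := by
  induction e with
  | zero => simp [motzkinT, motzkinGF_eq_wordGF]
  | succ e ih =>
    rw [wordGF_isMotzkinFrom_succ_eq_mul, pow_succ', ← ih]
    ring

theorem motzkinT_eq : motzkinT = X * (1 + motzkinT + motzkinT ^ 2) := by
  have h := congrArg (X * ·) wordGF_isMotzkinFrom_zero
  have h0 := X_mul_wordGF_isMotzkinFrom 0
  have h1 := X_mul_wordGF_isMotzkinFrom 1
  linear_combination h - h0 + X * h0 + X * h1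

theorem sq_X_mul_derivative_mul_one_sub_sq {R : Type*} [CommRing R] {t : R⟦X⟧}
    (h : t = X * (1 + t + t ^ 2)) :
    X ^ 2 * derivative R t * (1 - t ^ 2) = t ^ 2 := by
  have h' := congrArg (derivative R) h
  simp only [Derivation.leibniz, map_add, smul_eq_mul, pow_two, Derivation.map_one_eq_zero,
    derivative_X] at h'
  linear_combination (X ^ 2 * (1 + t + t ^ 2)) * h' -
    (X ^ 2 * derivative R t * (1 + 2 * t) + t + X * (1 + t + t ^ 2)) * h

theorem wordGF_isMotzkinGap_zero_zero (e : ℕ) :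
    wordGF (IsMotzkinGap 0 e 0) = motzkinT ^ e := by
  classical
  rw [wordGF_eq]
  rcases e with _ | e
  · simp [IsMotzkinGap, gap, isMotzkinFrom_nil, not_isMotzkinFrom_zero_down_cons, wordGF_false]
  · simp [IsMotzkinGap, gap, isMotzkinFrom_nil, isMotzkinFrom_succ_down_cons, wordGF_false,
      X_mul_wordGF_isMotzkinFrom]

theorem wordGF_isMotzkinGap_succ_zero (r e : ℕ) :
    wordGF (IsMotzkinGap (r + 1) e 0) =
      X * (wordGF (IsMotzkinGap r e 0) + wordGF (IsMotzkinGap r (e + 1) 0)) := by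
  classical
  rw [wordGF_eq]
  simp only [IsMotzkinGap, gap, Fintype.sum_option, Fintype.sum_bool, isMotzkinFrom_none_cons,
    isMotzkinFrom_up_cons, beq_iff_eq, reduceCtorEq, Option.some.injEq, Bool.true_eq_false,
    ↓reduceIte, Nat.add_right_cancel_iff, Nat.right_eq_add, Nat.add_eq_zero_iff, one_ne_zero,
    and_false, wordGF_false, add_zero, zero_add]
  rfl

theorem wordGF_isMotzkinGap_succ_succ (r e m : ℕ) :
    wordGF (IsMotzkinGap r (e + 1) (m + 1)) =
      X * (wordGF (IsMotzkinGap r e m) + wordGF (IsMotzkinGap r (e + 1) (m + 1)) +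
        wordGF (IsMotzkinGap r (e + 2) (m + 1))) := by
  classical
  conv_lhs => rw [wordGF_eq]
  unfold IsMotzkinGap
  simp only [gap, isMotzkinFrom_nil, isMotzkinFrom_none_cons, isMotzkinFrom_up_cons,
    isMotzkinFrom_succ_down_cons, Fintype.sum_option, Fintype.sum_bool, e.succ_ne_zero,
    beq_iff_eq, reduceCtorEq, Option.some.injEq, false_and, if_true, if_false]
  ring

theorem wordGF_isMotzkinGap_zero (r e : ℕ) :
    wordGF (IsMotzkinGap r e 0) = (X * (1 + motzkinT)) ^ r * motzkinT ^ e := by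
  induction r generalizing e with
  | zero => rw [wordGF_isMotzkinGap_zero_zero, pow_zero, one_mul]
  | succ r ih =>
    rw [wordGF_isMotzkinGap_succ_zero, ih, ih]
    ring

theorem wordGF_isMotzkinGap (r : ℕ) {e m : ℕ} (h : m ≤ e) :
    wordGF (IsMotzkinGap r e m) = (X * (1 + motzkinT)) ^ r * motzkinT ^ e := by
  induction m generalizing e with
  | zero => exact wordGF_isMotzkinGap_zero r e
  | succ m ih =>
    obtain ⟨k, rfl⟩ : ∃ k, e = m + k + 1 := ⟨e - m - 1, by omega⟩
    rw [← sub_eq_zero]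
    refine eq_zero_of_eq_X_mul_sum (s := fun j => {j, j + 1})
      (D := fun j => wordGF (IsMotzkinGap r (m + j + 1) (m + 1)) -
        (X * (1 + motzkinT)) ^ r * motzkinT ^ (m + j + 1)) (fun j => ?_) k
    have hrec := wordGF_isMotzkinGap_succ_succ r (m + j) m
    rw [ih (by omega : m ≤ m + j)] at hrec
    rw [Finset.sum_pair (by omega)]
    linear_combination hrec - (X * (1 + motzkinT)) ^ r * motzkinT ^ (m + j) * motzkinT_eq

theorem ncard_biUnion_finset {ι β : Type*} (t : Finset ι) {s : ι → Set β}
    (hs : ∀ i ∈ t, (s i).Finite) (hd : (t : Set ι).PairwiseDisjoint s) :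
    (⋃ i ∈ t, s i).ncard = ∑ i ∈ t, (s i).ncard := by
  have h := t.finite_toSet.ncard_biUnion hs hd
  rwa [finsum_mem_coe_finset] at h

theorem finite_length_add_eq_and {α β : Type*} [Finite α] [Finite β]
    (P : List α × List β → Prop) (N : ℕ) : {x | x.1.length + x.2.length = N ∧ P x}.Finite := by
  refine ((List.finite_length_le α N).prod (List.finite_length_le β N)).subset ?_
  rintro x ⟨h, -⟩
  exact ⟨by simp; omega, by simp; omega⟩

theorem coeff_wordGF_mul_wordGF {α β : Type*} [Finite α] [Finite β] (P : List α → Prop)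
    (Q : List β → Prop) (N : ℕ) :
    coeff N (wordGF P * wordGF Q) =
      {x : List α × List β | x.1.length + x.2.length = N ∧ P x.1 ∧ Q x.2}.ncard := by
  have hunion : {x : List α × List β | x.1.length + x.2.length = N ∧ P x.1 ∧ Q x.2} =
      ⋃ y ∈ Finset.HasAntidiagonal.antidiagonal N,
        {w | w.length = y.1 ∧ P w} ×ˢ {w | w.length = y.2 ∧ Q w} := by
    ext ⟨v, w⟩
    simp [and_assoc, and_left_comm, eq_comm]
  rw [hunion, ncard_biUnion_finset, coeff_mul]
  · simp [wordGF, Set.ncard_prod]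
  · exact fun y _ => (finite_length_eq_and P _).prod (finite_length_eq_and Q _)
  · rintro ⟨i, j⟩ - ⟨i', j'⟩ - hne
    rw [Function.onFun, Set.disjoint_left]
    rintro ⟨v, w⟩ ⟨⟨rfl, -⟩, ⟨rfl, -⟩⟩ ⟨⟨rfl, -⟩, ⟨rfl, -⟩⟩
    exact hne rfl

/-- Pairs of Motzkin paths of total length `N` descending to `0` from a common height `h + 1`,
with `r` and `s` letters, respectively, between their `(h+1)`-st and `(h+2)`-nd down steps. -/
def motzkinGapPairs (r s N : ℕ) : Set (List (Option Bool) × List (Option Bool)) :=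
  {x | x.1.length + x.2.length = N ∧
    ∃ h, IsMotzkinGap r (h + 1) (h + 1) x.1 ∧ IsMotzkinGap s (h + 1) (h + 1) x.2}

theorem ncard_motzkinGapPairs (r s N : ℕ) :
    ((motzkinGapPairs r s N).ncard : ℚ) =
      coeff N ((X * (1 + motzkinT)) ^ (r + s) *
        ∑ h ∈ Finset.range N, (motzkinT ^ (h + 1)) ^ 2) := by
  have hunion : motzkinGapPairs r s N = ⋃ h ∈ Finset.range N,
      {x | x.1.length + x.2.length = N ∧
        IsMotzkinGap r (h + 1) (h + 1) x.1 ∧ IsMotzkinGap s (h + 1) (h + 1) x.2} := by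
    ext x
    simp only [motzkinGapPairs, Set.mem_iUnion, Finset.mem_range, Set.mem_ofPred_eq]
    refine ⟨fun ⟨hN, h, hx⟩ => ⟨h, ?_, hN, hx⟩, fun ⟨h, _, hN, hx⟩ => ⟨hN, h, hx⟩⟩
    have := hx.1.1.1
    have := List.count_le_length (a := some false) (l := x.1)
    omega
  rw [hunion, ncard_biUnion_finset]
  · simp only [Nat.cast_sum, ← coeff_wordGF_mul_wordGF, wordGF_isMotzkinGap _ le_rfl, ← map_sum,
      Finset.mul_sum]
    congr! 2
    ring
  · exact fun h _ => finite_length_add_eq_and _ N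
  · intro h _ h' _ hne
    rw [Function.onFun, Set.disjoint_left]
    rintro x ⟨-, hx, -⟩ ⟨-, hx', -⟩
    exact hne (Nat.succ.inj (hx.1.height_unique hx'.1))

theorem X_pow_dvd_sq_X_mul_derivative_sub_sum {R : Type*} [CommRing R] {t : R⟦X⟧}
    (h : t = X * (1 + t + t ^ 2)) (H : ℕ) :
    X ^ (2 * H + 2) ∣ X ^ 2 * derivative R t - ∑ i ∈ Finset.range H, (t ^ (i + 1)) ^ 2 := by
  have hX : X ∣ t := ⟨_, h⟩
  have hunit : IsUnit (1 - t ^ 2) := by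
    rw [isUnit_iff_constantCoeff, map_sub, map_pow, X_dvd_iff.1 hX]
    simp
  have hgeom : (∑ i ∈ Finset.range H, (t ^ (i + 1)) ^ 2) * (1 - t ^ 2) =
      t ^ 2 - t ^ (2 * H + 2) := by
    induction H with
    | zero => simp
    | succ H ih =>
      rw [Finset.sum_range_succ, add_mul, ih]
      ring
  rw [← hunit.dvd_mul_right, sub_mul, hgeom, sq_X_mul_derivative_mul_one_sub_sq h, sub_sub_cancel]
  exact pow_dvd_pow_of_dvd hX _

theorem ncard_motzkinGapPairs_eq_coeff (r s N : ℕ) :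
    ((motzkinGapPairs r s (N + 2)).ncard : ℚ) =
      coeff N (derivative ℚ motzkinT * (X * (1 + motzkinT)) ^ (r + s)) := by
  rw [ncard_motzkinGapPairs,
    ← coeff_X_pow_mul (derivative ℚ motzkinT * (X * (1 + motzkinT)) ^ (r + s)) 2,
    ← sub_eq_zero, ← map_sub]
  refine X_pow_dvd_iff.1 ?_ _ (by omega : N + 2 < 2 * (N + 2) + 2)
  convert (X_pow_dvd_sq_X_mul_derivative_sub_sum motzkinT_eq (N + 2)).mul_left
    (-(X * (1 + motzkinT)) ^ (r + s)) using 1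
  ring

theorem motzkinBallot_succ (n k : ℕ) :
    (motzkinBallot n (k + 1) : ℚ) = coeff n ((X * (1 + motzkinT)) ^ k) := by
  have hgap := wordGF_isMotzkinGap_zero k 0
  rw [pow_zero, mul_one] at hgap
  rw [motzkinBallot]
  split_ifs with h
  · obtain rfl : n = k := by omega
    simp [mul_pow, coeff_X_pow_mul', motzkinT]
  · rw [← hgap, wordGF, coeff_mk]
    congr 3 with w
    refine and_congr_right fun hw => and_congr_right fun _ => ?_
    rcases lt_or_gt_of_ne (show n ≠ k by omega) with hk | hk
    · have hle : gap (some false) w 0 ≤ w.length := gap_le_length _ _ _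
      rw [List.getD_eq_default _ _ (by omega)]
      simp only [List.getD_eq_getElem?_getD, reduceCtorEq, ne_eq, add_tsub_cancel_right, false_and,
        false_iff]
      omega
    · exact (gap_zero_eq_iff _ _ (by omega)).symm

theorem motzkinBallot_eq_zero {n k : ℕ} (h : n < k) : motzkinBallot n (k + 1) = 0 := by
  have hcoeff := motzkinBallot_succ n k
  rw [mul_pow, coeff_X_pow_mul', if_neg (by omega)] at hcoeff
  exact_mod_cast hcoeff

theorem ncard_motzkinGapPairs_eq_sum (r s N : ℕ) :
    (motzkinGapPairs r s (N + 2)).ncard =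
      ∑ i ∈ Finset.range (N + 1), (i + 1) * motzkin i * motzkinBallot (N - i) (r + s + 1) := by
  have hderiv (i : ℕ) : coeff i (derivative ℚ motzkinT) = (i + 1) * motzkin i := by
    rw [coeff_derivative, motzkinT, coeff_succ_X_mul, motzkinGF, coeff_mk, mul_comm]
  have h := ncard_motzkinGapPairs_eq_coeff r s N
  simp only [coeff_mul, hderiv, ← motzkinBallot_succ,
    Finset.Nat.sum_antidiagonal_eq_sum_range_succ_mk] at h
  exact_mod_cast h

end GeneratingFunctions

/-! ### Turns of a word -/

/-- For each letter `b` of the word, in order, whether a letter other than `b` follows it; the word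
is read as being followed by the letter `e`. -/
def turns (e b : Bool) : List Bool → List Bool
  | [] => []
  | x :: l => if x = b then (l.head?.getD e != b) :: turns e b l else turns e b l

section Turns

variable (e b : Bool)

theorem length_turns (w : List Bool) : (turns e b w).length = w.count b := by
  induction w with
  | nil => rfl
  | cons x w ih => by_cases hx : x = b <;> simp [turns, hx, ih]

theorem turns_append (p q : List Bool) :
    turns e b (p ++ q) = turns (q.head?.getD e) b p ++ turns e b q := by
  induction p with
  | nil => rfl
  | cons x p ih => by_cases hx : x = b <;> simp [turns, hx, ih, Option.getD_or]

theorem take_turns_append (p q : List Bool) :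
    (turns e b (p ++ q)).take (p.count b) = turns (q.head?.getD e) b p := by
  rw [turns_append, List.take_left' (length_turns _ b p)]

/-- Turns away from `b` and turns towards `b` alternate. -/
theorem count_turns (w : List Bool) :
    (turns e b w).count true + (if w.head?.getD e = b then 0 else 1) =
      (turns e (!b) w).count true + (if e = b then 0 else 1) := by
  induction w with
  | nil => rfl
  | cons x w ih =>
    generalize hy : w.head?.getD e = y at ih
    cases x <;> cases b <;> cases y <;> simp [turns, hy] at ih ⊢ <;> omega

theorem getLast?_turns_not_ne (w : List Bool) : (turns (!b) b w).getLast? ≠ some false := by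
  induction w with
  | nil => simp [turns]
  | cons x w ih =>
    by_cases hx : x = b
    · rw [turns, if_pos hx, List.getLast?_cons]
      rcases hw : turns (!b) b w with _ | ⟨f, l⟩
      · have hb : w.count b = 0 := by rw [← length_turns (!b), hw, List.length_nil]
        cases w <;> grind
      · rw [hw] at ih
        grind
    · rwa [turns, if_neg hx]

theorem eq_of_turns_eq {w w' : List Bool} (hhead : w.head?.getD e = w'.head?.getD e)
    (h : ∀ c, turns e c w = turns e c w') : w = w' := by
  induction w generalizing w' with
  | nil =>
    rcases w' with _ | ⟨y, w'⟩
    · rfl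
    · simpa [turns] using h y
  | cons x w ih =>
    rcases w' with _ | ⟨y, w'⟩
    · simpa [turns] using h x
    · obtain rfl : x = y := hhead
      have hx := h x
      simp only [turns, if_true, List.cons.injEq, Bool.bne_left_inj] at hx
      congr 1
      refine ih hx.1 fun c => ?_
      rcases eq_or_ne x c with rfl | hc
      · exact hx.2
      · simpa [turns, hc] using h c

variable {e b}

theorem exists_turns_eq {as bs : List Bool} (has : as.getLast? ≠ some false)
    (hbs : bs.getLast? ≠ some false)
    (h : as.count true = bs.count true + if e = b then 0 else 1) :
    ∃ w, w.head?.getD e = b ∧ turns e b w = as ∧ turns e (!b) w = bs := by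
  induction hN : as.length + bs.length generalizing as bs b with
  | zero =>
    obtain ⟨rfl, rfl⟩ : as = [] ∧ bs = [] := by simpa using hN
    refine ⟨[], ?_, rfl, rfl⟩
    by_contra hne
    simp_all
  | succ N ih =>
    rcases as with _ | ⟨a, as⟩
    · rcases hlast : bs.getLast? with _ | _ | _
      · rw [List.getLast?_eq_none_iff.1 hlast] at hN
        simp at hN
      · exact absurd hlast hbs
      · have := List.count_pos_iff.2 (List.mem_of_getLast? hlast)
        simp only [List.count_nil] at h
        omega
    · have has' : as.getLast? ≠ some false := by
        rintro has'
        simp [List.getLast?_cons, has'] at has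
      rcases a with _ | _
      · obtain ⟨w, hw, rfl, rfl⟩ := ih (b := b) has' hbs (by simpa using h) (by simp at hN; omega)
        exact ⟨b :: w, rfl, by simp [turns, hw], by simp [turns]⟩
      · obtain ⟨w, hw, rfl, rfl⟩ := ih (b := !b) hbs has'
          (by cases e <;> cases b <;> simp at h ⊢ <;> omega) (by simp at hN; omega)
        exact ⟨b :: w, rfl, by simp [turns, hw], by simp [turns]⟩

theorem gap_zero_eq_gap_turns {w : List Bool} (hb : b ∈ w) (h : w.head?.getD e ≠ b) :
    gap b w 0 = gap true (turns e (!b) w) 0 + 1 := by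
  induction w with
  | nil => simp at hb
  | cons x w ih =>
    obtain rfl : x = !b := Bool.eq_not.2 h
    have hb : b ∈ w := by simpa using hb
    by_cases hw : w.head?.getD e = b
    · obtain ⟨w, rfl⟩ : ∃ v, w = b :: v := by cases w <;> simp_all
      simp [gap, turns]
    · simp [gap, turns, ih hb hw, Bool.eq_not.2 hw]

theorem gap_pos_iff {w : List Bool} {k : ℕ} (h : k + 1 < w.count b) :
    0 < gap b w (k + 1) ↔ (turns e b w)[k]? = some true := by
  induction w generalizing k with
  | nil => simp at h
  | cons x w ih =>
    by_cases hx : x = b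
    · subst hx
      rcases k with _ | k
      · obtain ⟨y, w, rfl⟩ : ∃ y v, w = y :: v := by cases w <;> simp_all
        by_cases hy : y = x <;> simp [gap, turns, hy]
      · simpa [gap, turns] using ih (k := k) (by simpa using h)
    · simpa [gap, turns, hx] using ih (k := k) (by simpa [hx] using h)

theorem gap_succ_eq_gap_turns {w : List Bool} {k : ℕ} (h : k + 1 < w.count b)
    (hk : (turns e b w)[k]? = some true) :
    gap b w (k + 1) = gap true (turns e (!b) w)
      (((turns e b w).take k).count true + if w.head?.getD e = b then 0 else 1) + 1 := by
  induction w generalizing k with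
  | nil => simp at h
  | cons x w ih =>
    by_cases hx : x = b
    · subst hx
      rcases k with _ | k
      · have hw : w.head?.getD e ≠ x := by simpa [turns] using hk
        simpa [gap, turns] using gap_zero_eq_gap_turns (by simpa using h) hw
      · have := ih (k := k) (by simpa using h) (by simpa [turns] using hk)
        by_cases hw : w.head?.getD e = x
        · simpa [gap, turns, hw] using this
        · simpa [gap, turns, bne_iff_ne.2 hw, hw] using this
    · obtain rfl : x = !b := Bool.eq_not.2 hx
      have := ih (k := k) (by simpa using h) (by simpa [turns] using hk)
      by_cases hw : w.head?.getD e = b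
      · simpa [gap, turns, hw] using this
      · simpa [gap, turns, hw, Bool.eq_not.2 hw] using this

end Turns

/-! ### Dyck paths with one return -/

/-- Balanced words of semilength `n` that stay strictly above the axis between their end points:
the Dyck paths whose only return is at the end. -/
def StrictPos (n : ℕ) (w : List Bool) : Prop :=
  w.count true = n ∧ w.count false = n ∧
    ∀ p q, w = p ++ q → p ≠ [] → q ≠ [] → p.count false < p.count true

theorem IsDyckWord.strictPos {n : ℕ} {w : List Bool} (hw : IsDyckWord n w)
    (hret : returns n w = {n}) : StrictPos n w := by
  obtain ⟨hlen, htrue, hfalse, hpre⟩ := hw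
  refine ⟨htrue, hfalse, ?_⟩
  rintro p q rfl hp hq
  refine lt_of_le_of_ne (hpre p (List.prefix_append _ _)) fun heq => ?_
  have hplen := List.count_false_add_count_true p
  have := List.length_pos_iff.2 hp
  have := List.length_pos_iff.2 hq
  rw [List.length_append] at hlen
  have hmem : p.count true ∈ returns n (p ++ q) := by
    rw [returns, Finset.mem_filter, Finset.mem_Icc, List.take_left' (by omega)]
    exact ⟨by omega, heq⟩
  rw [hret, Finset.mem_singleton] at hmem
  omega

namespace StrictPos

variable {n : ℕ} {w : List Bool}

theorem isDyckWord (h : StrictPos n w) : IsDyckWord n w := by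
  obtain ⟨htrue, hfalse, hpos⟩ := h
  have := List.count_false_add_count_true w
  refine ⟨by omega, htrue, hfalse, ?_⟩
  rintro p ⟨q, rfl⟩
  rcases eq_or_ne p [] with rfl | hp
  · simp
  rcases eq_or_ne q [] with rfl | hq
  · rw [List.append_nil] at htrue hfalse
    omega
  · exact (hpos p q rfl hp hq).le

theorem returns_eq (h : StrictPos n w) (hn : 1 ≤ n) : returns n w = {n} := by
  obtain ⟨htrue, hfalse, hpos⟩ := h
  have := List.count_false_add_count_true w
  ext k
  rw [returns, Finset.mem_filter, Finset.mem_Icc, Finset.mem_singleton]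
  constructor
  · rintro ⟨⟨hk, hkn⟩, heq⟩
    by_contra hne
    have := hpos (w.take (2 * k)) (w.drop (2 * k)) (List.take_append_drop _ _).symm
      (by rw [← List.length_pos_iff, List.length_take]; omega)
      (by rw [← List.length_pos_iff, List.length_drop]; omega)
    omega
  · rintro rfl
    rw [List.take_of_length_le (by omega)]
    omega

theorem head?_getD (h : StrictPos n w) : w.head?.getD true = true := by
  obtain ⟨htrue, hfalse, hpos⟩ := h
  rcases w with _ | ⟨_ | _, q⟩
  · rfl
  · have hq : q ≠ [] := by
      rintro rfl
      simp [← hfalse] at htrue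
    simpa using hpos [false] q rfl (by simp) hq
  · rfl

theorem exists_eq_append_false (h : StrictPos n w) (hn : 1 ≤ n) : ∃ v, w = v ++ [false] := by
  obtain ⟨htrue, hfalse, hpos⟩ := h
  rcases List.eq_nil_or_concat' w with rfl | ⟨v, _ | _, rfl⟩
  · simp only [List.count_nil] at htrue
    omega
  · exact ⟨v, rfl⟩
  · have hv : v ≠ [] := by
      rintro rfl
      simp [← htrue] at hfalse
    have := hpos v [true] rfl hv (by simp)
    simp only [List.count_append, List.count_singleton, beq_iff_eq, Bool.true_eq_false, ↓reduceIte,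
      add_zero] at htrue hfalse
    omega

end StrictPos

/-- Each initial segment of `us` has at most `k` more `true`s than the initial segment of `ds` that
is one entry shorter. -/
def Lag (k : ℕ) (us ds : List Bool) : Prop :=
  ∀ i, (us.take (i + 1)).count true ≤ k + (ds.take i).count true

section Lag

variable {k e : ℕ} {us us' ds ds' : List Bool}

theorem count_take_le_count_take (l : List Bool) {i j : ℕ} (h : i ≤ j) :
    (l.take i).count true ≤ (l.take j).count true :=
  (List.take_sublist_take_left h).count_le true

theorem lag_true_cons : Lag k (true :: us) (true :: ds) ↔ 1 ≤ k ∧ Lag k us ds := by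
  rw [Lag, ← Nat.and_forall_add_one]
  simp [Lag, ← add_assoc]

theorem lag_append (hlen : us.length = ds.length)
    (he : us.count true + e = k + ds.count true) :
    Lag k (us ++ us') (ds ++ ds') ↔ Lag k us ds ∧ Lag e us' ds' := by
  have hright (i : ℕ) :
      ((us ++ us').take (us.length + i)).count true = us.count true + (us'.take i).count true ∧
      ((ds ++ ds').take (us.length + i)).count true = ds.count true + (ds'.take i).count true := by
    rw [List.take_length_add_append, hlen, List.take_length_add_append]
    simp
  refine ⟨fun h => ⟨fun i => ?_, fun i => ?_⟩, fun ⟨h, h'⟩ i => ?_⟩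
  · rcases lt_or_ge i us.length with hi | hi
    · simpa [List.take_append_of_le_length, hlen ▸ hi.le, Nat.succ_le_of_lt hi] using h i
    · rw [List.take_of_length_le (by omega), List.take_of_length_le (by omega)]
      omega
  · have := h (us.length + i)
    rw [add_assoc, (hright _).1, (hright _).2] at this
    omega
  · rcases lt_or_ge i us.length with hi | hi
    · simpa [List.take_append_of_le_length, hlen ▸ hi.le, Nat.succ_le_of_lt hi] using h i
    · obtain ⟨i, rfl⟩ := Nat.exists_eq_add_of_le hi
      have := h' i
      rw [add_assoc, (hright _).1, (hright _).2]
      omega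

theorem count_true_map_beq {α : Type*} [BEq α] (a : α) (w : List α) :
    (w.map (· == a)).count true = w.count a := by
  simp [List.count, List.countP_map, Function.comp_def]

theorem lag_map_beq_iff {α : Type*} [BEq α] [LawfulBEq α] {a b : α} (hab : a ≠ b) {w : List α} :
    Lag k (w.map (· == a)) (w.map (· == b)) ↔ ∀ p, p <+: w → p.count a ≤ p.count b + k := by
  simp only [Lag, ← List.map_take, count_true_map_beq]
  constructor
  · intro h p hp
    rw [List.prefix_iff_eq_take.1 hp]
    rcases p.length with _ | i
    · simp
    · have hmono : (w.take i).count b ≤ (w.take (i + 1)).count b :=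
        (List.take_sublist_take_left i.le_succ).count_le b
      have := h i
      omega
  · intro h i
    rcases lt_or_ge i w.length with hi | hi
    · have hi0 := h _ (w.take_prefix i)
      have hi1 := h _ (w.take_prefix (i + 1))
      rw [List.take_succ_eq_append_getElem hi, List.count_append, List.count_append] at hi1
      rw [List.take_succ_eq_append_getElem hi, List.count_append]
      by_cases hw : w[i] = a
      · rw [List.count_eq_zero.2 (show b ∉ [w[i]] by simp [hw, hab.symm])] at hi1
        omega
      · rw [List.count_eq_zero.2 (show a ∉ [w[i]] by simpa using Ne.symm hw)]
        omega
    · rw [List.take_of_length_le hi, List.take_of_length_le (by omega), add_comm]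
      exact h w (List.prefix_refl w)

end Lag

theorem isMotzkinFrom_iff_lag {e : ℕ} {w : List (Option Bool)}
    (he : w.count (some false) = w.count (some true) + e) :
    IsMotzkinFrom e w ↔ Lag e (w.map (· == some false)) (w.map (· == some true)) := by
  rw [lag_map_beq_iff (by simp), IsMotzkinFrom, and_iff_right he]

theorem isMotzkinFrom_iff_lag_reverse {e : ℕ} {w : List (Option Bool)}
    (he : w.count (some false) = w.count (some true) + e) :
    IsMotzkinFrom e w ↔
      Lag 0 (w.reverse.map (· == some true)) (w.reverse.map (· == some false)) := by
  rw [lag_map_beq_iff (by simp), IsMotzkinFrom, and_iff_right he]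
  constructor
  · rintro h p ⟨q, hpq⟩
    have hw : w = q.reverse ++ p.reverse := by rw [← List.reverse_append, hpq, List.reverse_reverse]
    have := h q.reverse ⟨_, hw.symm⟩
    simp only [hw, List.count_append, List.count_reverse] at he this ⊢
    omega
  · rintro h p ⟨q, rfl⟩
    have := h q.reverse (by simp)
    simp only [List.count_append, List.count_reverse] at he this
    omega

section StrictPos

variable {n : ℕ} {w us ds : List Bool}

theorem StrictPos.lag (h : StrictPos n w) (hus : turns true true w = us ++ [true])
    (hds : turns true false w = ds ++ [true]) : Lag 0 us ds := by
  have hhead := h.head?_getD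
  obtain ⟨htrue, hfalse, hpos⟩ := h
  have hlu := length_turns true true w
  have hld := length_turns true false w
  have hcount := count_turns true true w
  simp only [hus, hds, Bool.not_true, hhead, if_true, List.length_append, List.length_singleton,
    List.count_append] at hlu hld hcount
  intro i
  rcases le_or_gt us.length i with hi | hi
  · rw [List.take_of_length_le (by omega), List.take_of_length_le (by omega)]
    omega
  obtain ⟨p, q, rfl, hp⟩ := exists_append_cons_of_lt_count true w (by omega : i + 1 < w.count true)
  have hlt : p.count false < p.count true := hpos p _ rfl (by rintro rfl; simp at hp) (by simp)
  have hu : us.take (p.count true) = turns true true p := by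
    rw [← List.take_append_of_le_length (by omega), ← hus]
    exact take_turns_append true true p _
  have hd : ds.take (p.count false) = turns true false p := by
    rw [← List.take_append_of_le_length (by omega), ← hds]
    exact take_turns_append true false p _
  have hcount := count_turns true true p
  have hmono := count_take_le_count_take ds (by omega : p.count false ≤ i)
  rw [hd] at hmono
  rw [← hp, hu]
  simp only [Bool.not_true, if_true] at hcount
  omega

theorem strictPos_of_lag (htrue : w.count true = n) (hfalse : w.count false = n)
    (hhead : w.head?.getD true = true) (hus : turns true true w = us ++ [true])
    (hds : turns true false w = ds ++ [true]) (h : Lag 0 us ds) : StrictPos n w := by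
  refine ⟨htrue, hfalse, ?_⟩
  rintro p q rfl hp hq
  by_contra! hle
  have hlu := length_turns true true (p ++ q)
  have hld := length_turns true false (p ++ q)
  have hplen := List.count_false_add_count_true p
  have hqlen := List.count_false_add_count_true q
  have := List.length_pos_iff.2 hp
  have := List.length_pos_iff.2 hq
  simp only [hus, hds, List.length_append, List.length_singleton] at hlu hld
  rw [List.count_append] at htrue hfalse hlu hld
  obtain ⟨p, l, rfl, hy⟩ := exists_append_cons_of_lt_count false p
    (by omega : p.count false - 1 < p.count false)
  have hx : p.count true ≤ (p ++ false :: l).count true := by simp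
  have hhead : p.head?.getD false = true := by cases p <;> simp_all
  have hu : us.take (p.count true) = turns false true p := by
    rw [← List.take_append_of_le_length (by omega), ← hus, List.append_assoc]
    exact take_turns_append true true p _
  have hd : ds.take (p.count false) = turns false false p := by
    rw [← List.take_append_of_le_length (by omega), ← hds, List.append_assoc]
    exact take_turns_append true false p _
  have hcount := count_turns false true p
  have hmono := count_take_le_count_take us (by omega : p.count true ≤ p.count false + 1)
  have := h (p.count false)
  rw [hu] at hmono
  rw [hd] at this
  simp only [hhead, Bool.not_true, Bool.false_eq_true, ↓reduceIte, add_zero] at hcount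
  omega

end StrictPos

/-- The flags `0 < rᵢ` (for `b = true`) or `0 < sᵢ` (for `b = false`) of a Dyck path with one index
at which both hold. The letter at any other index is up, down or horizontal; the letters before the
common index form the reverse of `L`, and those after it form `M`. At an index before the common
one, up means `0 < rᵢ` and down `0 < sᵢ`; at an index after it, the roles are exchanged, so that
both `L` and `M` descend to height `0`. -/
def starFlags (b : Bool) (L M : List (Option Bool)) : List Bool :=
  L.reverse.map (· == some b) ++ true :: M.map (· == some !b)

section StarFlags

variable {L M : List (Option Bool)}

theorem starFlags_concat (b : Bool) (c : Option Bool) :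
    starFlags b (L ++ [c]) M = (c == some b) :: starFlags b L M := by
  simp [starFlags]

theorem length_starFlags (b : Bool) : (starFlags b L M).length = L.length + (M.length + 1) := by
  simp [starFlags]

theorem count_true_starFlags (b : Bool) :
    (starFlags b L M).count true = L.count (some b) + (M.count (some !b) + 1) := by
  rw [starFlags, List.count_append, List.count_cons_self, count_true_map_beq, count_true_map_beq,
    List.count_reverse]

theorem starFlags_getElem?_eq_true_iff {i : ℕ} :
    (∀ b, (starFlags b L M)[i]? = some true) ↔ i = L.length := by
  induction L using List.reverseRecOn generalizing i with
  | nil =>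
    rcases i with _ | i
    · simp [starFlags]
    · rcases h : M[i]? with _ | _ | _ | _ <;> simp [starFlags, h]
  | append_singleton L c ih =>
    rcases i with _ | i
    · rcases c with _ | _ | _ <;> simp [starFlags_concat]
    · simpa [starFlags_concat] using ih

theorem lag_starFlags_iff
    (h : (starFlags true L M).count true = (starFlags false L M).count true) :
    Lag 0 (starFlags true L M) (starFlags false L M) ↔
      ∃ e, IsMotzkinFrom (e + 1) L ∧ IsMotzkinFrom (e + 1) M := by
  rw [count_true_starFlags, count_true_starFlags, Bool.not_true, Bool.not_false] at h
  have hlag {e : ℕ} (heL : L.count (some false) = L.count (some true) + e)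
      (heM : M.count (some false) = M.count (some true) + e) :
      Lag 0 (starFlags true L M) (starFlags false L M) ↔
        1 ≤ e ∧ IsMotzkinFrom e L ∧ IsMotzkinFrom e M := by
    have hlen :
        (L.reverse.map (· == some true)).length = (L.reverse.map (· == some false)).length := by
      simp
    have he : (L.reverse.map (· == some true)).count true + e =
        0 + (L.reverse.map (· == some false)).count true := by
      rw [count_true_map_beq, count_true_map_beq, List.count_reverse, List.count_reverse]
      omega
    rw [isMotzkinFrom_iff_lag_reverse heL, isMotzkinFrom_iff_lag heM, starFlags, starFlags,
      lag_append hlen he, lag_true_cons, and_left_comm]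
    rfl
  constructor
  · intro hLag
    have hlt := hLag L.length
    rw [starFlags, starFlags, List.append_cons, List.take_left' (by simp),
      List.take_left' (by simp), List.count_append, count_true_map_beq, count_true_map_beq,
      List.count_reverse, List.count_reverse, List.count_singleton_self] at hlt
    obtain ⟨e, he⟩ := Nat.exists_eq_add_of_le hlt
    exact ⟨e, ((hlag (by omega) (by omega)).1 hLag).2⟩
  · rintro ⟨e, hL, hM⟩
    exact (hlag hL.1 hM.1).2 ⟨by omega, hL, hM⟩

end StarFlags

/-- The gaps of `w` have the signs prescribed by `starFlags`; the last letter of either kind, which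
begins no gap, counts as followed by a turn. -/
def Encodes (w : List Bool) (L M : List (Option Bool)) : Prop :=
  w.head?.getD true = true ∧ ∀ b, turns true b w = starFlags b L M ++ [true]

namespace Encodes

variable {w : List Bool} {L M : List (Option Bool)} {e k r s : ℕ}

theorem count_eq (h : Encodes w L M) (b : Bool) : w.count b = L.length + M.length + 2 := by
  rw [← length_turns true b, h.2 b, List.length_append, length_starFlags]
  rfl

theorem count_starFlags_eq (h : Encodes w L M) :
    (starFlags true L M).count true = (starFlags false L M).count true := by
  have := count_turns true true w
  simpa [h.1, h.2] using this

theorem strictPos_iff (h : Encodes w L M) : StrictPos (L.length + M.length + 2) w ↔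
    ∃ e, IsMotzkinFrom (e + 1) L ∧ IsMotzkinFrom (e + 1) M := by
  rw [← lag_starFlags_iff h.count_starFlags_eq]
  exact ⟨fun hw => hw.lag (h.2 true) (h.2 false),
    strictPos_of_lag (h.count_eq true) (h.count_eq false) h.1 (h.2 true) (h.2 false)⟩

theorem turns_getElem? (h : Encodes w L M) (b : Bool) (hk : k < L.length + M.length + 1) :
    (turns true b w)[k]? = (starFlags b L M)[k]? := by
  rw [h.2 b, List.getElem?_append_left (by rw [length_starFlags]; omega)]

theorem rStat_pos_and_sStat_pos_iff (h : Encodes w L M) (hk : k < L.length + M.length + 1) :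
    0 < rStat w (k + 1) ∧ 0 < sStat w (k + 1) ↔ k = L.length := by
  have hlt (b : Bool) : k + 1 < w.count b := by
    rw [h.count_eq]
    omega
  rw [rStat_succ (hlt true), sStat_succ (hlt false), gap_pos_iff (e := true) (hlt true),
    gap_pos_iff (e := true) (hlt false), h.turns_getElem? _ hk, h.turns_getElem? _ hk,
    ← starFlags_getElem?_eq_true_iff (L := L) (M := M), Bool.forall_bool, and_comm]

theorem gap_succ_length (h : Encodes w L M) (b : Bool) :
    gap b w (L.length + 1) = gap true (starFlags (!b) L M ++ [true])
      (L.count (some b) + if b = true then 0 else 1) + 1 := by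
  have htake : (turns true b w).take L.length = L.reverse.map (· == some b) := by
    rw [h.2 b, starFlags, List.append_assoc, List.take_left' (by simp)]
  rw [gap_succ_eq_gap_turns (e := true) (by rw [h.count_eq]; omega)
    (by rw [h.turns_getElem? _ (by omega), starFlags_getElem?_eq_true_iff.2 rfl]), htake,
    count_true_map_beq, List.count_reverse, h.1, h.2]
  simp only [eq_comm]

theorem rStat_eq (h : Encodes w L M) (hL : IsMotzkinFrom (e + 1) L) :
    rStat w (L.length + 1) = gap (some false) L (e + 1) + 1 := by
  have hcount := hL.1
  rw [rStat_succ (by rw [h.count_eq]; omega), h.gap_succ_length, if_pos rfl, starFlags,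
    List.append_assoc, gap_append_of_lt_count _ _ _ (by
      rw [count_true_map_beq, List.count_reverse, Bool.not_true]
      omega),
    gap_map_beq]
  exact congrArg (· + 1) (gap_reverse (some false) L hcount.symm)

theorem sStat_eq (h : Encodes w L M) (hL : IsMotzkinFrom (e + 1) L) :
    sStat w (L.length + 1) = gap (some false) M (e + 1) + 1 := by
  have hcount : L.count (some false) + 1 =
      (L.reverse.map (· == some true)).count true + (e + 1 + 1) := by
    rw [count_true_map_beq, List.count_reverse, hL.1, add_assoc]
  rw [sStat_succ (by rw [h.count_eq]; omega), h.gap_succ_length, if_neg (by simp), starFlags,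
    List.append_assoc, Bool.not_false, hcount, gap_append_count_add_succ, List.cons_append, gap,
    if_pos BEq.rfl, gap_append_singleton_self, Bool.not_true, gap_map_beq]

theorem mem_dyckRS_and_returns_eq_iff (h : Encodes w L M) :
    (w ∈ dyckRS (L.length + M.length + 2) (r + 1) (s + 1) ∧
      returns (L.length + M.length + 2) w = {L.length + M.length + 2}) ↔
    ∃ e, IsMotzkinGap r (e + 1) (e + 1) L ∧ IsMotzkinGap s (e + 1) (e + 1) M := by
  constructor
  · rintro ⟨⟨hw, i, hi, hpos, hr, hs, -⟩, hret⟩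
    obtain ⟨e, hL, hM⟩ := h.strictPos_iff.1 (hw.strictPos hret)
    rw [Finset.mem_Icc] at hi
    obtain ⟨k, rfl⟩ := Nat.exists_eq_add_of_le' hi.1
    obtain rfl := (h.rStat_pos_and_sStat_pos_iff (by omega)).1 hpos
    rw [h.rStat_eq hL, Nat.succ_inj] at hr
    rw [h.sStat_eq hL, Nat.succ_inj] at hs
    exact ⟨e, ⟨hL, hr⟩, hM, hs⟩
  · rintro ⟨e, ⟨hL, rfl⟩, hM, rfl⟩
    have hw := h.strictPos_iff.2 ⟨e, hL, hM⟩
    refine ⟨⟨hw.isDyckWord, L.length + 1, Finset.mem_Icc.2 (by omega),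
      (h.rStat_pos_and_sStat_pos_iff (by omega)).2 rfl, h.rStat_eq hL, h.sStat_eq hL, ?_⟩,
      hw.returns_eq (by omega)⟩
    intro j hj hpos
    rw [Finset.mem_Icc] at hj
    obtain ⟨k, rfl⟩ := Nat.exists_eq_add_of_le' hj.1
    rw [(h.rStat_pos_and_sStat_pos_iff (by omega)).1 hpos]

end Encodes

theorem eq_of_forall_map_beq_eq {l l' : List (Option Bool)}
    (h : ∀ b, l.map (· == some b) = l'.map (· == some b)) : l = l' := by
  refine List.ext_getElem (by simpa using congrArg List.length (h true)) fun i hi hi' => ?_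
  have hb (b : Bool) : l[i] = some b ↔ l'[i] = some b := by
    have := congrArg (·[i]?) (h b)
    simpa [hi, hi', Bool.beq_eq_decide_eq] using this
  rcases hx : l[i] with _ | b
  · refine (Option.eq_none_iff_forall_ne_some.2 fun b => ?_).symm
    simp [← hb, hx]
  · exact ((hb b).1 hx).symm

theorem exists_map_beq_eq {n : ℕ} {f : Bool → List Bool} (hlen : ∀ b, (f b).length = n)
    (h : ∀ i : ℕ, ¬∀ b, (f b)[i]? = some true) :
    ∃ l : List (Option Bool), ∀ b, l.map (· == some b) = f b := by
  refine ⟨List.zipWith (fun x y => if x then some true else if y then some false else none)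
    (f true) (f false), fun b => List.ext_getElem (by simp [hlen]) fun i _ hi => ?_⟩
  have hlt (b : Bool) : i < (f b).length := by rwa [hlen b, ← hlen]
  have hb : ¬∀ b, (f b)[i]'(hlt b) = true := by simpa [hlt] using h i
  rw [List.getElem_map, List.getElem_zipWith]
  cases b <;> cases htrue : (f true)[i]'(hlt true) <;> cases hfalse : (f false)[i]'(hlt false) <;>
    simp_all [Bool.forall_bool]

theorem starFlags_injective {L M L' M' : List (Option Bool)}
    (h : ∀ b, starFlags b L M = starFlags b L' M') : L = L' ∧ M = M' := by
  have hlen : L.length = L'.length := by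
    rw [← starFlags_getElem?_eq_true_iff (M := M')]
    exact fun b => h b ▸ starFlags_getElem?_eq_true_iff.2 rfl b
  have hinj (b : Bool) := List.append_inj (h b) (by simpa using hlen)
  refine ⟨?_, eq_of_forall_map_beq_eq fun b => ?_⟩
  · exact List.reverse_injective (eq_of_forall_map_beq_eq fun b => (hinj b).1)
  · simpa using (hinj (!b)).2

theorem exists_starFlags_eq {n i : ℕ} {f : Bool → List Bool} (hlen : ∀ b, (f b).length = n)
    (h : ∀ j, (∀ b, (f b)[j]? = some true) ↔ j = i) :
    ∃ L M, ∀ b, starFlags b L M = f b := by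
  obtain ⟨L, hL⟩ := exists_map_beq_eq (f := fun b => (f b).take i) (n := min i n)
    (by simp [hlen]) fun j hj => by
      simp only [List.getElem?_take] at hj
      split_ifs at hj with hji
      · exact hji.ne ((h j).1 hj)
      · simp at hj
  obtain ⟨M, hM⟩ := exists_map_beq_eq (f := fun b => (f !b).drop (i + 1)) (n := n - (i + 1))
    (by simp [hlen]) fun j hj => by
      have := (h (i + 1 + j)).1 fun b => by simpa using hj (!b)
      omega
  refine ⟨L.reverse, M, fun b => ?_⟩
  have hi : (f b)[i]? = some true := (h i).2 rfl b
  obtain ⟨hlt, hi⟩ := List.getElem?_eq_some_iff.1 hi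
  rw [starFlags, List.reverse_reverse, hL, hM, Bool.not_not, ← hi, ← List.drop_eq_getElem_cons,
    List.take_append_drop]

theorem Encodes.word_unique {w w' : List Bool} {L M : List (Option Bool)} (h : Encodes w L M)
    (h' : Encodes w' L M) : w = w' :=
  eq_of_turns_eq true (h.1.trans h'.1.symm) fun b => (h.2 b).trans (h'.2 b).symm

theorem Encodes.code_unique {w : List Bool} {L M L' M' : List (Option Bool)} (h : Encodes w L M)
    (h' : Encodes w L' M') : L = L' ∧ M = M' :=
  starFlags_injective fun b => List.append_cancel_right ((h.2 b).symm.trans (h'.2 b))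

theorem exists_encodes {L M : List (Option Bool)}
    (h : (starFlags true L M).count true = (starFlags false L M).count true) :
    ∃ w, Encodes w L M := by
  obtain ⟨w, hhead, htrue, hfalse⟩ := exists_turns_eq (e := true) (b := true)
    (as := starFlags true L M ++ [true]) (bs := starFlags false L M ++ [true])
    (by simp) (by simp) (by simpa using h)
  exact ⟨w, hhead, Bool.forall_bool.2 ⟨hfalse, htrue⟩⟩

theorem StrictPos.exists_turns_eq_append {n : ℕ} {w : List Bool} (h : StrictPos n w) (hn : 1 ≤ n)
    (b : Bool) : ∃ f, turns true b w = f ++ [true] := by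
  have hlast : (turns true b w).getLast? ≠ some false := by
    cases b
    · exact getLast?_turns_not_ne false w
    · obtain ⟨v, rfl⟩ := h.exists_eq_append_false hn
      simpa [turns_append, turns] using getLast?_turns_not_ne true v
  have hlen : (turns true b w).length = n := by
    rw [length_turns]
    cases b
    · exact h.2.1
    · exact h.1
  rcases List.eq_nil_or_concat' (turns true b w) with hnil | ⟨f, _ | _, hf⟩
  · rw [hnil, List.length_nil] at hlen
    omega
  · simp [hf] at hlast
  · exact ⟨f, hf⟩

theorem exists_encodes_of_mem_dyckRS {n r s : ℕ} {w : List Bool} (hw : w ∈ dyckRS n r s)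
    (hret : returns n w = {n}) : ∃ L M, n = L.length + M.length + 2 ∧ Encodes w L M := by
  obtain ⟨hw, i, hi, hpos, -, -, huniq⟩ := hw
  have hw := hw.strictPos hret
  rw [Finset.mem_Icc] at hi
  obtain ⟨i, rfl⟩ := Nat.exists_eq_add_of_le' hi.1
  choose f hf using hw.exists_turns_eq_append (by omega)
  have hcount (b : Bool) : w.count b = n := by
    cases b
    · exact hw.2.1
    · exact hw.1
  have hlen (b : Bool) : (f b).length = n - 1 := by
    have := length_turns true b w
    rw [hf, hcount, List.length_append, List.length_singleton] at this
    omega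
  have hstar {j : ℕ} (hj : j + 1 < n) :
      (∀ b, (f b)[j]? = some true) ↔ 0 < rStat w (j + 1) ∧ 0 < sStat w (j + 1) := by
    have hturn (b : Bool) : (turns true b w)[j]? = (f b)[j]? := by
      rw [hf, List.getElem?_append_left (by rw [hlen]; omega)]
    rw [rStat_succ (by rwa [hcount]), sStat_succ (by rwa [hcount]),
      gap_pos_iff (e := true) (by rwa [hcount]), gap_pos_iff (e := true) (by rwa [hcount]),
      hturn, hturn, Bool.forall_bool, and_comm]
  obtain ⟨L, M, hLM⟩ := exists_starFlags_eq (i := i) hlen fun j => by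
    constructor
    · intro hj
      have hjn := (List.getElem?_eq_some_iff.1 (hj true)).1
      rw [hlen] at hjn
      simpa using huniq (j + 1) (Finset.mem_Icc.2 (by omega)) ((hstar (by omega)).1 hj)
    · rintro rfl
      exact (hstar (by omega)).2 hpos
  refine ⟨L, M, ?_, hw.head?_getD, fun b => by rw [hf, hLM]⟩
  have := hlen true
  rw [← hLM, length_starFlags] at this
  omega

theorem ncard_dyckRS_one_return_eq (r s : ℕ) {n : ℕ} (hn : 2 ≤ n) :
    {w | w ∈ dyckRS n (r + 1) (s + 1) ∧ returns n w = {n}}.ncard =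
      (motzkinGapPairs r s (n - 2)).ncard := by
  have hex : ∀ x ∈ motzkinGapPairs r s (n - 2), ∃ w, Encodes w x.1 x.2 := by
    rintro x ⟨-, e, hL, hM⟩
    refine exists_encodes ?_
    rw [count_true_starFlags, count_true_starFlags, hL.1.1, Bool.not_true, hM.1.1, Bool.not_false]
    omega
  have hmem {L M : List (Option Bool)} {w : List Bool} (h : Encodes w L M)
      (hlen : n = L.length + M.length + 2) :
      (w ∈ dyckRS n (r + 1) (s + 1) ∧ returns n w = {n}) ↔
        (L, M) ∈ motzkinGapPairs r s (n - 2) := by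
    subst hlen
    exact h.mem_dyckRS_and_returns_eq_iff.trans (and_iff_right (by rfl)).symm
  choose f hf using hex
  symm
  refine Set.ncard_congr f (fun x hx => ?_) (fun x y hx hy hxy => ?_) fun w hw => ?_
  · exact (hmem (hf x hx) (by have := hx.1; omega)).2 hx
  · exact Prod.ext_iff.2 ((hf x hx).code_unique (hxy ▸ hf y hy))
  · obtain ⟨L, M, hlen, hLM⟩ := exists_encodes_of_mem_dyckRS hw.1 hw.2
    have hx := (hmem hLM hlen).1 hw
    exact ⟨(L, M), hx, (hf _ hx).word_unique hLM⟩

theorem sum_Icc_motzkinZ_mul_motzkinBallotZ (k N : ℕ) :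
    ∑ i ∈ Finset.Icc (0 : ℤ) ((N : ℤ) - k), (i + 1) * motzkinZ i * motzkinBallotZ (N - i) (k + 1) =
      ∑ i ∈ Finset.range (N + 1), ((i + 1) * motzkin i * motzkinBallot (N - i) (k + 1) : ℤ) := by
  rw [← Finset.sum_filter_of_ne (p := fun i => i + k ≤ N)]
  · refine Finset.sum_nbij' Int.toNat (fun i => (i : ℤ)) ?_ ?_ ?_ ?_ ?_ <;>
      simp only [Finset.mem_Icc, Finset.mem_filter, Finset.mem_range]
    · omega
    · omega
    · omega
    · omega
    · rintro i ⟨hi, hiN⟩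
      lift i to ℕ using hi
      rw [motzkinZ, if_pos (by omega), motzkinBallotZ, if_pos (by omega), Int.toNat_natCast,
        show ((N : ℤ) - i).toNat = N - i by omega]
  · intro i hi hne
    rw [Finset.mem_range] at hi
    by_contra! hlt
    rw [motzkinBallot_eq_zero (by omega), Nat.cast_zero, mul_zero] at hne
    exact hne rfl

/-- **Lemma.** For `r, s ≥ 1` and `n ≥ r + s + 2`, the number of Dyck paths in `𝒟ₙ^{r,s}`
whose only return is at the end is `Σ_{i=0}^{n-2-s-r} (i+1)·Mᵢ·T_{n-4-i, r+s-1}`. -/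
theorem dyckRS_one_return_count (r s n : ℕ) (hr : 1 ≤ r) (hs : 1 ≤ s)
    (hn : r + s + 2 ≤ n) :
    ({w | w ∈ dyckRS n r s ∧ returns n w = {n}}.ncard : ℤ) =
      ∑ i ∈ Finset.Icc (0 : ℤ) ((n : ℤ) - 2 - s - r),
        (i + 1) * motzkinZ i * motzkinBallotZ ((n : ℤ) - 4 - i) (r + s - 1) := by
  obtain ⟨r, rfl⟩ := Nat.exists_eq_add_of_le' hr
  obtain ⟨s, rfl⟩ := Nat.exists_eq_add_of_le' hs
  obtain ⟨N, rfl⟩ := Nat.exists_eq_add_of_le' (by omega : 4 ≤ n)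
  have hbound : ((N + 4 : ℕ) : ℤ) - 2 - (s + 1 : ℕ) - (r + 1 : ℕ) = N - (r + s : ℕ) := by omega
  have hlength : ((N + 4 : ℕ) : ℤ) - 4 = N := by omega
  have hindex : r + 1 + (s + 1) - 1 = r + s + 1 := by omega
  rw [ncard_dyckRS_one_return_eq r s (by omega), Nat.add_sub_assoc (by norm_num),
    ncard_motzkinGapPairs_eq_sum, hbound, hlength, hindex, sum_Icc_motzkinZ_mul_motzkinBallotZ]
  norm_cast
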